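/- Entropy flux compatibility: assume the thermodynamic relations e_ρ = (p − θ·p_θ)/ρ², η_ρ = −p_θ/ρ² and η_θ = e_θ/θ. Let Z := (−η + (e − u²/2 + p/ρ)/θ, u/θ, −1/θ) ∈ ℝ³. Then the row vector Zᵀ · Df¹ equals (−u·η − ρ·u·η_ρ, −ρ·η, −ρ·u·η_θ), i.e., the gradient with respect to U = (ρ,u,θ) of the entropy flux Θ = −ρ·u·η. (This is the flux condition D_UΘ = D_V𝓔·D_Uf¹ making (𝓔,Θ) = (−ρη, −ρuη) a convex entropy/entropy-flux pair for the Navier–Stokes–Fourier system.) -/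

import Mathlib

open Matrix

/-!
The flux is `f¹ = u V + (0, p, p u)`, where `V` is the vector of conserved quantities. Hence
`Df¹ = u Df⁰ + V ⊗ ∇u + D(0, p, p u)`, with derivatives in `(ρ, u, θ)`. By Gibbs' relation
`θ dη = de + p d(1/ρ)`, the entropy variables satisfy `Zᵀ Df⁰ = ∇(-ρ η)`. Moreover
`Z · V = -ρ η + p / θ`, and the term `p / θ` is cancelled by the pressure part, which contributes
`-(p / θ) ∇u`. What remains is the product rule `∇(-ρ u η) = u ∇(-ρ η) + (-ρ η) ∇u`.
-/

namespace NavierStokesFourier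

variable {K : Type*} [Field K]

section Definitions

variable (ρ θ u p e η pρ pθ eρ eθ : K)

/-- The conserved quantities `V = f⁰`: mass, momentum and total energy. -/
def conservedVariables : Fin 3 → K :=
  ![ρ, ρ * u, ρ * (e + u ^ 2 / 2)]

/-- The Jacobian `Df⁰` of the conserved quantities in `(ρ, u, θ)`. As in the Jacobians below, `eρ`
and the like are independent parameters standing for the values of the partial derivatives. -/
def conservedJacobian : Matrix (Fin 3) (Fin 3) K :=
  !![1, 0, 0;
     u, ρ, 0;
     e + u ^ 2 / 2 + ρ * eρ, ρ * u, ρ * eθ]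

/-- The Jacobian in `(ρ, u, θ)` of the pressure part `(0, p, p u)` of the flux. -/
def pressureFluxJacobian : Matrix (Fin 3) (Fin 3) K :=
  !![0, 0, 0;
     pρ, 0, pθ;
     u * pρ, p, u * pθ]

/-- The Jacobian `Df¹` of the flux in `(ρ, u, θ)`. -/
def fluxJacobian : Matrix (Fin 3) (Fin 3) K :=
  !![u, ρ, 0;
     u ^ 2 + pρ, 2 * ρ * u, pθ;
     u * (e + u ^ 2 / 2) + ρ * u * eρ + u * pρ, ρ * (e + u ^ 2 / 2) + ρ * u ^ 2 + p,
       ρ * u * eθ + u * pθ]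

/-- The entropy variables `Z`, the gradient of the mathematical entropy `-ρ η` in the conserved
quantities. -/
def entropyVariables : Fin 3 → K :=
  ![-η + (e - u ^ 2 / 2 + p / ρ) / θ, u / θ, -1 / θ]

end Definitions

theorem fluxJacobian_eq (ρ u p e pρ pθ eρ eθ : K) :
    fluxJacobian ρ u p e pρ pθ eρ eθ =
      u • conservedJacobian ρ u e eρ eθ + vecMulVec (conservedVariables ρ u e) ![0, 1, 0] +
        pressureFluxJacobian u p pρ pθ := by
  ext i j
  rw [Matrix.add_apply, Matrix.add_apply, vecMulVec_apply]
  fin_cases i <;> fin_cases j <;>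
    simp only [fluxJacobian, conservedJacobian, pressureFluxJacobian, conservedVariables,
      Matrix.smul_apply, smul_eq_mul, of_apply, cons_val', cons_val, cons_val_fin_one,
      Fin.reduceFinMk] <;>
    ring

theorem entropyVariables_vecMul_pressureFluxJacobian (ρ θ u p e η pρ pθ : K) :
    entropyVariables ρ θ u p e η ᵥ* pressureFluxJacobian u p pρ pθ = ![0, -(p / θ), 0] := by
  simp only [entropyVariables, pressureFluxJacobian, cons_vecMul_cons, empty_vecMul, smul_vec3,
    vec3_add, add_zero, smul_eq_mul]
  refine vec3_eq ?_ ?_ ?_ <;> ring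

variable [NeZero (2 : K)] {ρ θ eρ eθ ηρ ηθ : K}

theorem entropyVariables_dotProduct_conservedVariables (hρ : ρ ≠ 0) (u p e η : K) :
    entropyVariables ρ θ u p e η ⬝ᵥ conservedVariables ρ u e = -ρ * η + p / θ := by
  have hu : u ^ 2 / 2 + u ^ 2 / 2 = u ^ 2 := add_halves _
  have hp : p / ρ * ρ = p := div_mul_cancel₀ p hρ
  simp only [entropyVariables, conservedVariables, vec3_dotProduct']
  linear_combination θ⁻¹ * hp - ρ * θ⁻¹ * hu

theorem entropyVariables_vecMul_conservedJacobian {u p e η : K} (hθ : θ ≠ 0)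
    (hηρ : θ * ηρ = eρ - p / ρ ^ 2) (hηθ : θ * ηθ = eθ) :
    entropyVariables ρ θ u p e η ᵥ* conservedJacobian ρ u e eρ eθ =
      ![-η - ρ * ηρ, 0, -ρ * ηθ] := by
  have hu : u ^ 2 / 2 + u ^ 2 / 2 = u ^ 2 := add_halves _
  have hp : p / ρ = ρ * (p / ρ ^ 2) := by
    rw [mul_div_left_comm, sq, div_self_mul_self', div_eq_mul_inv]
  have mass : (p / ρ - ρ * eρ) / θ = -(ρ * ηρ) :=
    calc (p / ρ - ρ * eρ) / θ = -(ρ * (θ * ηρ / θ)) := by rw [hηρ, hp]; ring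
      _ = -(ρ * ηρ) := by rw [mul_div_cancel_left₀ _ hθ]
  have energy : eθ / θ = ηθ := by
    rw [← hηθ, mul_div_cancel_left₀ _ hθ]
  simp only [entropyVariables, conservedJacobian, cons_vecMul_cons, empty_vecMul, smul_vec3,
    vec3_add, add_zero, smul_eq_mul]
  refine vec3_eq ?_ ?_ ?_
  · linear_combination mass - θ⁻¹ * hu
  · ring
  · linear_combination -ρ * energy

end NavierStokesFourier

open NavierStokesFourier in
theorem nsf_entropy_flux_compatibility_general {K : Type*} [Field K] [NeZero (2 : K)]
    {ρ θ p eρ eθ ηρ ηθ : K} (u e η pρ pθ : K) (hρ : ρ ≠ 0) (hθ : θ ≠ 0)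
    (hηρ : θ * ηρ = eρ - p / ρ ^ 2) (hηθ : θ * ηθ = eθ) :
    entropyVariables ρ θ u p e η ᵥ* fluxJacobian ρ u p e pρ pθ eρ eθ =
      ![-u * η - ρ * u * ηρ, -ρ * η, -ρ * u * ηθ] := by
  rw [fluxJacobian_eq, vecMul_add, vecMul_add, vecMul_smul, vecMul_vecMulVec,
    entropyVariables_vecMul_conservedJacobian hθ hηρ hηθ,
    entropyVariables_dotProduct_conservedVariables hρ,
    entropyVariables_vecMul_pressureFluxJacobian, smul_vec3, smul_vec3, vec3_add, vec3_add]
  refine vec3_eq ?_ ?_ ?_ <;> simp only [smul_eq_mul] <;> ring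

/-- Entropy flux compatibility for the Navier–Stokes–Fourier system: under the
thermodynamic relations `e_ρ = (p − θp_θ)/ρ²`, `η_ρ = −p_θ/ρ²`, `η_θ = e_θ/θ`, the row
vector `Zᵀ·Df¹` equals the gradient of the entropy flux `Θ = −ρuη` with respect to
`U = (ρ,u,θ)`, i.e., `D_UΘ = D_V𝓔·D_Uf¹`. -/
theorem nsf_entropy_flux_compatibility (ρ θ u p e η pρ pθ eρ eθ ηρ ηθ : ℝ)
    (hρ : 0 < ρ) (hθ : 0 < θ) (heθ : 0 < eθ)
    (heρ : eρ = (p - θ * pθ) / ρ ^ 2)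
    (hηρ : ηρ = -pθ / ρ ^ 2)
    (hηθ : ηθ = eθ / θ) :
    let Df1 : Matrix (Fin 3) (Fin 3) ℝ :=
      !![u, ρ, 0;
         u ^ 2 + pρ, 2 * ρ * u, pθ;
         u * (e + u ^ 2 / 2) + ρ * u * eρ + u * pρ, ρ * (e + u ^ 2 / 2) + ρ * u ^ 2 + p,
           ρ * u * eθ + u * pθ]
    let Z : Fin 3 → ℝ := ![-η + (e - u ^ 2 / 2 + p / ρ) / θ, u / θ, -1 / θ]
    Z ᵥ* Df1 = ![-u * η - ρ * u * ηρ, -ρ * η, -ρ * u * ηθ] :=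
  nsf_entropy_flux_compatibility_general u e η pρ pθ hρ.ne' hθ.ne'
    (by rw [heρ, hηρ]; ring) (by rw [hηθ, mul_div_cancel₀ _ hθ.ne'])
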